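/- Let H be a complex Hilbert space, M a von Neumann algebra acting on H, ξ₀ a cyclic and separating vector for M, and N another von Neumann algebra acting on H with the closure of {b ξ₀ : b ∈ N, b ≥ 0} contained in P♯. Let α : N → B(H) be a linear map such that α(x) ∈ M and α(x) ξ₀ = x ξ₀ for every x ∈ N, and let g ∈ M be an orthogonal projection commuting with α(N) such that α(xy)(1 − g) = α(y)α(x)(1 − g) for all x, y ∈ N and such that α(h)(1−g) is a projection for every projection h ∈ N. Suppose h ∈ N is a projection for which there exists a sequence (vₙ) in N with vₙ* vₙ = h for all n and vₙ vₙ* ζ → 0 for every ζ ∈ H. Then α(h)(1 − g) = 0. -/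

import Mathlib

open scoped InnerProductSpace
open Filter

variable {H : Type*} [NormedAddCommGroup H] [InnerProductSpace ℂ H] [CompleteSpace H]

/-- The positive cone `P♯`: the closure in `H` of `{a ξ₀ : a ∈ M, a positive}`. -/
def sharpCone (M : VonNeumannAlgebra H) (ξ₀ : H) : Set H :=
  closure {ζ : H | ∃ a : H →L[ℂ] H, a ∈ M ∧ a.IsPositive ∧ a ξ₀ = ζ}

/-- `ξ₀` is a cyclic vector for `M`: the linear span of `{x ξ₀ : x ∈ M}` is dense in `H`. -/
def IsCyclicVector (M : VonNeumannAlgebra H) (ξ₀ : H) : Prop :=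
  Dense ((Submodule.span ℂ ((fun x : H →L[ℂ] H => x ξ₀) '' (M : Set (H →L[ℂ] H)))) : Set H)

/-- `ξ₀` is a separating vector for `M`: `x ∈ M` and `x ξ₀ = 0` imply `x = 0`. -/
def IsSeparatingVector (M : VonNeumannAlgebra H) (ξ₀ : H) : Prop :=
  ∀ x : H →L[ℂ] H, x ∈ M → x ξ₀ = 0 → x = 0

/-!
A separating vector `ξ` for `M` is cyclic for the commutant of `M`, so positivity of `a ∈ M` can be
tested on the vectors `y ξ` with `y` in the commutant, where `⟪a (y ξ), y ξ⟫ = ⟪y (a ξ), y ξ⟫`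
depends only on `a ξ`: thus `a ≥ 0` as soon as `a ξ ∈ P♯`. Since `α x` is the element of `M` that
agrees with `x` at `ξ`, it follows that `α` preserves positivity and adjoints. With `k = 1 - g`, the
antimultiplicativity `α h k = α (vₙ* vₙ) k = α (vₙ) α (vₙ*) k` then gives
`⟪α h (k ξ), k ξ⟫ = ‖α (vₙ*) (k ξ)‖² = ‖k (vₙ* ξ)‖² → 0`,
and `α h ≥ 0` forces `α h k ξ = 0`, whence `α h k = 0`.
-/

section Hilbert

variable {𝕜 E : Type*} [RCLike 𝕜] [NormedAddCommGroup E] [InnerProductSpace 𝕜 E] [CompleteSpace E]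

theorem inner_star_mul_self_apply (T : E →L[𝕜] E) (x y : E) :
    ⟪(star T * T) x, y⟫_𝕜 = ⟪T x, T y⟫_𝕜 := by
  rw [mul_apply_eq_comp, ContinuousLinearMap.star_eq_adjoint,
    ContinuousLinearMap.adjoint_inner_left]

theorem tendsto_apply_of_tendsto_star_mul_self_apply {ι : Type*} {l : Filter ι}
    {T : ι → E →L[𝕜] E} {x : E} (hT : Tendsto (fun i => (star (T i) * T i) x) l (nhds 0)) :
    Tendsto (fun i => T i x) l (nhds 0) := by
  have hinner : Tendsto (fun i => ⟪T i x, T i x⟫_𝕜) l (nhds 0) := by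
    simpa only [inner_star_mul_self_apply, inner_zero_left] using
      hT.inner (𝕜 := 𝕜) (tendsto_const_nhds (x := x))
  have hsq : Tendsto (fun i => ‖T i x‖ ^ 2) l (nhds 0) := by
    simpa [inner_self_eq_norm_sq_to_K] using hinner.norm
  rw [tendsto_zero_iff_norm_tendsto_zero]
  simpa using hsq.sqrt

end Hilbert

theorem apply_eq_zero_of_isPositive_of_inner_eq_zero {T : H →L[ℂ] H} (hT : T.IsPositive) {x : H}
    (hx : ⟪T x, x⟫_ℂ = 0) : T x = 0 := by
  obtain ⟨S, rfl⟩ := CStarAlgebra.nonneg_iff_eq_star_mul_self.1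
    (ContinuousLinearMap.nonneg_iff_isPositive T |>.2 hT)
  rw [inner_star_mul_self_apply, inner_self_eq_zero] at hx
  rw [mul_apply_eq_comp, hx, map_zero]

/-- The closed subspace `[A ξ]` generated by the orbit of `ξ` under `A`; its orthogonal projection
lies in the commutant of `A`. The span is taken to match `IsCyclicVector`. -/
def cyclicSubspace (A : VonNeumannAlgebra H) (ξ : H) : Submodule ℂ H :=
  (Submodule.span ℂ ((fun x : H →L[ℂ] H => x ξ) '' (A : Set (H →L[ℂ] H)))).topologicalClosure

instance (A : VonNeumannAlgebra H) (ξ : H) : CompleteSpace (cyclicSubspace A ξ) :=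
  (Submodule.isClosed_topologicalClosure _).completeSpace_coe

theorem self_mem_cyclicSubspace (A : VonNeumannAlgebra H) (ξ : H) : ξ ∈ cyclicSubspace A ξ :=
  Submodule.le_topologicalClosure _ (Submodule.subset_span ⟨1, one_mem A, rfl⟩)

theorem starProjection_cyclicSubspace_mem_commutant (A : VonNeumannAlgebra H) (ξ : H) :
    (cyclicSubspace A ξ).starProjection ∈ A.commutant := by
  rw [VonNeumannAlgebra.IsStarProjection.mem_iff isStarProjection_starProjection]
  intro y hy
  rw [VonNeumannAlgebra.commutant_commutant] at hy
  rw [Submodule.range_starProjection]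
  refine Submodule.topologicalClosure_mem_invtSubmodule ?_
  rw [Module.End.mem_invtSubmodule, Submodule.span_le]
  rintro _ ⟨x, hx, rfl⟩
  exact Submodule.subset_span ⟨y * x, mul_mem hy hx, rfl⟩

theorem IsSeparatingVector.isCyclicVector_commutant {M : VonNeumannAlgebra H} {ξ : H}
    (hsep : IsSeparatingVector M ξ) : IsCyclicVector M.commutant ξ := by
  set P := (cyclicSubspace M.commutant ξ).starProjection
  have hPM : P ∈ M := by
    simpa only [VonNeumannAlgebra.commutant_commutant] using
      starProjection_cyclicSubspace_mem_commutant M.commutant ξ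
  have hPξ : P ξ = ξ :=
    Submodule.starProjection_eq_self_iff.2 (self_mem_cyclicSubspace M.commutant ξ)
  have hP_one : 1 - P = 0 := hsep _ (sub_mem (one_mem M) hPM) (by simp [hPξ])
  intro ζ
  have hPζ : P ζ = ζ := by rw [← sub_eq_zero.1 hP_one, one_apply_eq_self]
  exact Submodule.starProjection_eq_self_iff.1 hPζ

theorem IsCyclicVector.dense_image {A : VonNeumannAlgebra H} {ξ : H} (hcyc : IsCyclicVector A ξ) :
    Dense ((fun x : H →L[ℂ] H => x ξ) '' (A : Set (H →L[ℂ] H))) := by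
  let L : Submodule ℂ H := A.toStarSubalgebra.toSubalgebra.toSubmodule.map
    (ContinuousLinearMap.apply ℂ H ξ : (H →L[ℂ] H) →ₗ[ℂ] H)
  have hL : (fun x : H →L[ℂ] H => x ξ) '' (A : Set (H →L[ℂ] H)) = L := rfl
  rw [IsCyclicVector, hL, Submodule.span_eq] at hcyc
  exact hcyc

open scoped ComplexOrder in
theorem IsSeparatingVector.isPositive_of_apply_mem_sharpCone {M : VonNeumannAlgebra H} {ξ : H}
    (hsep : IsSeparatingVector M ξ) {a : H →L[ℂ] H} (ha : a ∈ M) (haξ : a ξ ∈ sharpCone M ξ) :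
    a.IsPositive := by
  suffices hnonneg : ∀ w, 0 ≤ ⟪a w, w⟫_ℂ by
    rw [ContinuousLinearMap.isPositive_iff_complex]
    intro w
    exact ⟨(Complex.eq_re_of_ofReal_le (hnonneg w)).symm, (Complex.nonneg_iff.1 (hnonneg w)).1⟩
  intro w
  refine hsep.isCyclicVector_commutant.dense_image.induction (P := fun w => 0 ≤ ⟪a w, w⟫_ℂ) ?_
    (isClosed_le (by fun_prop) (by fun_prop)) w
  rintro _ ⟨y, hy, rfl⟩
  have hcomm : ∀ b ∈ M, b (y ξ) = y (b ξ) := fun b hb =>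
    DFunLike.congr_fun (VonNeumannAlgebra.mem_commutant_iff.1 hy b hb) ξ
  have hcone : sharpCone M ξ ⊆ {ζ | 0 ≤ ⟪y ζ, y ξ⟫_ℂ} := by
    refine closure_minimal ?_ (isClosed_le (by fun_prop) (by fun_prop))
    rintro _ ⟨b, hb, hb_pos, rfl⟩
    rw [Set.mem_ofPred_eq, ← hcomm b hb]
    exact hb_pos.inner_nonneg_left (y ξ)
  rw [hcomm a ha]
  exact hcone haξ

section Cone

variable {M : VonNeumannAlgebra H} {N : StarSubalgebra ℂ (H →L[ℂ] H)} {ξ : H}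

theorem IsSeparatingVector.isSelfAdjoint_of_apply_eq (hsep : IsSeparatingVector M ξ)
    (hcone : ∀ b ∈ N, b.IsPositive → b ξ ∈ sharpCone M ξ) {a b : H →L[ℂ] H} (ha : a ∈ M)
    (hb : b ∈ N) (hb_sa : IsSelfAdjoint b) (hab : a ξ = b ξ) : IsSelfAdjoint a := by
  set c : H →L[ℂ] H := algebraMap ℝ _ ‖b‖
  have hc_eq : c = algebraMap ℂ _ (‖b‖ : ℂ) := IsScalarTower.algebraMap_apply ℝ ℂ _ _
  have hcM : c ∈ M := hc_eq ▸ M.toStarSubalgebra.algebraMap_mem _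
  have hcN : c ∈ N := hc_eq ▸ N.algebraMap_mem _
  have hbc_pos : (b + c).IsPositive := by
    simpa only [ContinuousLinearMap.le_def, sub_neg_eq_add] using hb_sa.neg_algebraMap_norm_le_self
  have hac_pos : (a + c).IsPositive := by
    refine hsep.isPositive_of_apply_mem_sharpCone (add_mem ha hcM) ?_
    simpa only [add_apply, hab] using hcone _ (add_mem hb hcN) hbc_pos
  have hc_sa : IsSelfAdjoint c := IsSelfAdjoint.algebraMap _ (.all _)
  simpa only [add_sub_cancel_right] using hac_pos.isSelfAdjoint.sub hc_sa

theorem IsSeparatingVector.eq_star_of_apply_eq (hsep : IsSeparatingVector M ξ)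
    (hcone : ∀ b ∈ N, b.IsPositive → b ξ ∈ sharpCone M ξ) {a a' x : H →L[ℂ] H} (ha : a ∈ M)
    (ha' : a' ∈ M) (hx : x ∈ N) (hax : a ξ = x ξ) (hax' : a' ξ = star x ξ) : a' = star a := by
  have hsum : IsSelfAdjoint (a + a') :=
    hsep.isSelfAdjoint_of_apply_eq hcone (add_mem ha ha') (add_mem hx (star_mem hx))
      (IsSelfAdjoint.add_star_self x) (by simp only [add_apply, hax, hax'])
  have hdiff : IsSelfAdjoint (Complex.I • (a - a')) :=
    hsep.isSelfAdjoint_of_apply_eq hcone (M.toStarSubalgebra.smul_mem (sub_mem ha ha') _)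
      (N.smul_mem (sub_mem hx (star_mem hx)) Complex.I)
      (by simp [isSelfAdjoint_iff, ← smul_neg])
      (by simp [hax, hax'])
  have hsum_eq : star a + star a' = a + a' := by rw [← star_add, hsum.star_eq]
  have hdiff_eq : star a' - star a = a - a' := by
    refine smul_right_injective _ Complex.I_ne_zero ?_
    simpa [isSelfAdjoint_iff, ← smul_neg] using! hdiff
  linear_combination (norm := module) (1 / 2 : ℂ) • hdiff_eq - (1 / 2 : ℂ) • hsum_eq

end Cone

theorem stmt6_general {M : VonNeumannAlgebra H} {N : StarSubalgebra ℂ (H →L[ℂ] H)} {ξ : H}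
    (hsep : IsSeparatingVector M ξ) (hcone : ∀ b ∈ N, b.IsPositive → b ξ ∈ sharpCone M ξ)
    {α : (H →L[ℂ] H) → (H →L[ℂ] H)} (hmem : ∀ x ∈ N, α x ∈ M) (hfix : ∀ x ∈ N, α x ξ = x ξ)
    {k : H →L[ℂ] H} (hkM : k ∈ M) (hk_comm : ∀ x ∈ N, Commute k (α x))
    (hk_anti : ∀ x ∈ N, ∀ y ∈ N, α (x * y) * k = α y * α x * k)
    {ι : Type*} {l : Filter ι} [l.NeBot] {h : H →L[ℂ] H} {v : ι → H →L[ℂ] H}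
    (hvN : ∀ i, v i ∈ N) (hv : ∀ i, star (v i) * v i = h)
    (hv_lim : Tendsto (fun i => (v i * star (v i)) ξ) l (nhds 0)) :
    α h * k = 0 := by
  obtain ⟨i₀⟩ := l.nonempty_of_neBot
  have hhN : h ∈ N := hv i₀ ▸ mul_mem (star_mem (hvN i₀)) (hvN i₀)
  have hh_pos : h.IsPositive := by
    rw [← ContinuousLinearMap.nonneg_iff_isPositive, ← hv i₀]
    exact star_mul_self_nonneg (v i₀)
  have hαh_pos : (α h).IsPositive :=
    hsep.isPositive_of_apply_mem_sharpCone (hmem h hhN) (hfix h hhN ▸ hcone h hhN hh_pos)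
  have hα_star (i : ι) : α (v i) = star (α (star (v i))) :=
    hsep.eq_star_of_apply_eq hcone (hmem _ (star_mem (hvN i))) (hmem _ (hvN i))
      (star_mem (hvN i)) (hfix _ (star_mem (hvN i))) (by rw [star_star, hfix _ (hvN i)])
  have hinner (i : ι) : ⟪α h (k ξ), k ξ⟫_ℂ = ⟪k (star (v i) ξ), k (star (v i) ξ)⟫_ℂ := by
    have hαk : α (star (v i)) (k ξ) = k (star (v i) ξ) := by
      rw [← hfix _ (star_mem (hvN i))]
      exact DFunLike.congr_fun (hk_comm _ (star_mem (hvN i))).eq.symm ξ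
    calc ⟪α h (k ξ), k ξ⟫_ℂ
        = ⟪(star (α (star (v i))) * α (star (v i))) (k ξ), k ξ⟫_ℂ := by
          rw [← hα_star, ← mul_apply_eq_comp, ← mul_apply_eq_comp,
            ← hk_anti _ (star_mem (hvN i)) _ (hvN i), hv i]
      _ = ⟪k (star (v i) ξ), k (star (v i) ξ)⟫_ℂ := by rw [inner_star_mul_self_apply, hαk]
  have hk_lim : Tendsto (fun i => k (star (v i) ξ)) l (nhds 0) := by
    have hstar_lim : Tendsto (fun i => star (v i) ξ) l (nhds 0) :=
      tendsto_apply_of_tendsto_star_mul_self_apply (by simpa only [star_star] using hv_lim)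
    exact (k.continuous.tendsto' 0 0 (map_zero k)).comp hstar_lim
  have hinner_zero : ⟪α h (k ξ), k ξ⟫_ℂ = 0 := by
    have hlim := hk_lim.inner (𝕜 := ℂ) hk_lim
    simp only [← hinner, inner_zero_left] at hlim
    exact tendsto_nhds_unique tendsto_const_nhds hlim
  exact hsep _ (mul_mem (hmem h hhN) hkM)
    (apply_eq_zero_of_isPositive_of_inner_eq_zero hαh_pos hinner_zero)

/-- The antihomomorphic part of `α` vanishes on properly infinite projections:
if `h ∈ N` is a projection carrying a sequence of isometries `vₙ` with `vₙ vₙ* → 0` strongly,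
then `α(h)(1 - g) = 0`. -/
theorem stmt6 (M N : VonNeumannAlgebra H) (ξ₀ : H)
    (hcyc : IsCyclicVector M ξ₀) (hsep : IsSeparatingVector M ξ₀)
    (hsub : closure {ζ : H | ∃ b : H →L[ℂ] H, b ∈ N ∧ b.IsPositive ∧ b ξ₀ = ζ} ⊆
      sharpCone M ξ₀)
    (α : (H →L[ℂ] H) → (H →L[ℂ] H))
    (hadd : ∀ x ∈ N, ∀ y ∈ N, α (x + y) = α x + α y)
    (hsmul : ∀ (c : ℂ), ∀ x ∈ N, α (c • x) = c • α x)
    (hmem : ∀ x ∈ N, α x ∈ M)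
    (hfix : ∀ x ∈ N, (α x) ξ₀ = x ξ₀)
    (g : H →L[ℂ] H) (hgM : g ∈ M) (hg_sa : IsSelfAdjoint g) (hg_idem : g * g = g)
    (hg_comm : ∀ x ∈ N, g * α x = α x * g)
    (hg_anti : ∀ x ∈ N, ∀ y ∈ N, α (x * y) * (1 - g) = α y * α x * (1 - g))
    (hg_proj : ∀ h : H →L[ℂ] H, h ∈ N → IsSelfAdjoint h → h * h = h →
      IsSelfAdjoint (α h * (1 - g)) ∧ (α h * (1 - g)) * (α h * (1 - g)) = α h * (1 - g))
    (h : H →L[ℂ] H) (hhN : h ∈ N) (hh_sa : IsSelfAdjoint h) (hh_idem : h * h = h)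
    (v : ℕ → (H →L[ℂ] H)) (hvN : ∀ n, v n ∈ N)
    (hv_isom : ∀ n, star (v n) * v n = h)
    (hv_sot : ∀ ζ : H, Tendsto (fun n => (v n * star (v n)) ζ) atTop (nhds 0)) :
    α h * (1 - g) = 0 :=
  stmt6_general (N := N.toStarSubalgebra) hsep
    (fun b hb hpos => hsub (subset_closure ⟨b, hb, hpos, rfl⟩)) hmem hfix
    (sub_mem (one_mem M) hgM) (fun x hx => (Commute.one_left _).sub_left (hg_comm x hx)) hg_anti
    hvN hv_isom (hv_sot ξ₀)
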